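/- Every r-uniform hypergraph containing no odd cycle admits a strong vertex coloring with r colors, i.e., a partition of its vertex set into r classes such that every edge meets each class in at most one vertex. -/

import Mathlib

/-- The hypergraph with edge set `E` contains an odd cycle: a cyclic
sequence of `k ≥ 3` (`k` odd) distinct vertices and distinct edges with
`{xᵢ, xᵢ₊₁} ⊆ eᵢ` for all `i` (indices cyclic). -/
def HasOddCycle {V : Type*} (E : Finset (Finset V)) : Prop :=
  ∃ (k : ℕ) (x : Fin k → V) (e : Fin k → Finset V),
    3 ≤ k ∧ Odd k ∧ Function.Injective x ∧ Function.Injective e ∧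
    (∀ i, e i ∈ E) ∧ ∀ i, x i ∈ e i ∧ x (finRotate k i) ∈ e i


/-- A non-2-colorable graph has an odd closed walk without repeated vertices. -/
lemma exists_odd_closed {V : Type*} (G : SimpleGraph V) (h : ¬ G.Colorable 2) :
    ∃ (u : V) (w : G.Walk u u), Odd w.length ∧
      ∀ i j, i < j → j < w.length → w.getVert i ≠ w.getVert j := by
  classical
  have hex : ∃ n, ∃ (u : V) (w : G.Walk u u), w.length = n ∧ Odd n := by
    rw [SimpleGraph.two_colorable_iff_forall_loop_even] at h
    push Not at h
    obtain ⟨u, w, hw⟩ := h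
    exact ⟨_, u, w, rfl, by simpa using hw⟩
  obtain ⟨u, w, hw, ho⟩ := Nat.find_spec hex
  have hmin : ∀ (v : V) (w' : G.Walk v v), Odd w'.length → w.length ≤ w'.length := by
    intro v w' h'
    rw [hw]
    exact Nat.find_min' hex ⟨v, w', rfl, h'⟩
  refine ⟨u, w, hw ▸ ho, ?_⟩
  rw [← hw] at ho
  intro i j hij hj heq
  have e1 : (w.drop i).getVert (j - i) = w.getVert i := by
    rw [SimpleGraph.Walk.drop_getVert, heq]
    congr 1
    omega
  have l1 : ((((w.drop i).take (j - i)).copy rfl e1)).length = j - i := by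
    simp
    omega
  have l2 : ((w.take i).append ((w.drop j).copy heq.symm rfl)).length = i + (w.length - j) := by
    simp
    omega
  have m1 := hmin _ (((w.drop i).take (j - i)).copy rfl e1)
  have m2 := hmin _ ((w.take i).append ((w.drop j).copy heq.symm rfl))
  rw [l1] at m1
  rw [l2] at m2
  rcases Nat.even_or_odd (j - i) with he | he
  · have : Odd (i + (w.length - j)) := by
      rw [Nat.odd_iff] at *
      rw [Nat.even_iff] at he
      omega
    have := m2 this
    omega
  · have := m1 he
    omega

/-- Bicolouring lemma: choosing a pair of vertices in each edge of a family
gives a bipartite graph. -/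
lemma bicolor {V : Type*} (E F : Finset (Finset V)) (hF : F ⊆ E)
    (hodd : ¬ HasOddCycle E) (a b : Finset V → V)
    (hab : ∀ f ∈ F, a f ∈ f ∧ b f ∈ f ∧ a f ≠ b f) :
    ∃ d : V → Bool, ∀ f ∈ F, d (a f) ≠ d (b f) := by
  classical
  let G : SimpleGraph V := SimpleGraph.fromEdgeSet {z | ∃ f ∈ F, s(a f, b f) = z}
  have hG : G.Colorable 2 := by
    by_contra hcon
    obtain ⟨u, w, ho, hinj⟩ := exists_odd_closed G hcon
    apply hodd
    have hadj : ∀ i : Fin w.length, ∃ f ∈ F,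
        s(a f, b f) = s(w.getVert i, w.getVert (i + 1)) := by
      intro i
      have := w.adj_getVert_succ i.2
      rw [SimpleGraph.fromEdgeSet_adj] at this
      exact this.1
    choose e heF he using hadj
    have hk1 : w.length ≠ 1 := by
      intro h1
      have := w.adj_getVert_succ (i := 0) (by omega)
      have h2 : w.getVert (0 + 1) = u := by
        rw [zero_add, ← h1, w.getVert_length]
      rw [h2, w.getVert_zero] at this
      exact G.irrefl this
    have hk : 3 ≤ w.length := by
      rcases ho with ⟨m, hm⟩
      omega
    have hinj' : ∀ i j, i < w.length → j < w.length → w.getVert i = w.getVert j → i = j := by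
      intro i j hi hj h
      rcases lt_trichotomy i j with h' | h' | h'
      · exact absurd h (hinj _ _ h' hj)
      · exact h'
      · exact absurd h.symm (hinj _ _ h' hi)
    have hrot : ∀ i : Fin w.length, w.getVert (finRotate w.length i) = w.getVert (i + 1) ∧
        ((finRotate w.length i : ℕ) = i + 1 ∨
          ((finRotate w.length i : ℕ) = 0 ∧ (i : ℕ) + 1 = w.length)) := by
      have key : ∀ n (hn : 0 < n) (i : Fin n), (finRotate n i : ℕ) = i + 1 ∨
          ((finRotate n i : ℕ) = 0 ∧ (i : ℕ) + 1 = n) := by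
        intro n hn i
        obtain ⟨m, rfl⟩ := Nat.exists_eq_succ_of_ne_zero hn.ne'
        rw [coe_finRotate]
        split_ifs with h
        · right
          simp [h]
        · left
          rfl
      intro i
      have := key w.length (by omega) i
      refine ⟨?_, this⟩
      rcases this with h | ⟨h, h'⟩
      · rw [h]
      · rw [h, h', w.getVert_zero, w.getVert_length]
    refine ⟨w.length, fun i => w.getVert i, e, hk, ho, ?_, ?_, fun i => hF (heF i), ?_⟩
    · intro i j h
      exact Fin.ext (hinj' _ _ i.2 j.2 h)
    · intro i j h
      have h1 := he i
      rw [h, he j, ← (hrot i).1, ← (hrot j).1, Sym2.eq_iff] at h1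
      rcases h1 with ⟨h1, -⟩ | ⟨h1, h2⟩
      · exact Fin.ext (hinj' _ _ i.2 j.2 h1.symm)
      · have h1' := hinj' _ _ j.2 (finRotate _ i).2 h1
        have h2' := hinj' _ _ (finRotate _ j).2 i.2 h2
        have hi := (hrot i).2
        have hj := (hrot j).2
        omega
    · intro i
      obtain ⟨h1, h2, -⟩ := hab _ (heF i)
      have h3 := he i
      rw [← (hrot i).1, Sym2.eq_iff] at h3
      rcases h3 with ⟨h3, h4⟩ | ⟨h3, h4⟩
      · rw [h3] at h1; rw [h4] at h2; exact ⟨h1, h2⟩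
      · rw [h3] at h1; rw [h4] at h2; exact ⟨h2, h1⟩
  obtain ⟨C⟩ := hG
  refine ⟨fun v => decide (C v = 0), fun f hf => ?_⟩
  have hA : G.Adj (a f) (b f) := by
    rw [SimpleGraph.fromEdgeSet_adj]
    exact ⟨⟨f, hf, rfl⟩, (hab f hf).2.2⟩
  have hv := C.valid hA
  intro h
  apply hv
  simp only [decide_eq_decide] at h
  generalize C (a f) = p at *
  generalize C (b f) = q at *
  revert p q
  decide

theorem stmt17 {V : Type*} [Fintype V] [DecidableEq V] (r : ℕ) (hr : 0 < r)
    (E : Finset (Finset V)) (hunif : ∀ e ∈ E, e.card = r)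
    (hodd : ¬ HasOddCycle E) :
    ∃ c : V → Fin r, ∀ e ∈ E, Set.InjOn c (e : Set V) := by
  classical
  have : Nonempty (Fin r) := ⟨⟨0, hr⟩⟩
  obtain ⟨c, hc⟩ := Finite.exists_max (fun c : V → Fin r => ∑ e ∈ E, (e.image c).card)
  refine ⟨c, fun e he => ?_⟩
  by_contra hninj
  obtain ⟨x, hx, y, hy, hxy, hne⟩ : ∃ x ∈ e, ∃ y ∈ e, c x = c y ∧ x ≠ y := by
    simp only [Set.InjOn] at hninj
    push Not at hninj
    obtain ⟨x, hx, y, hy, h1, h2⟩ := hninj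
    exact ⟨x, hx, y, hy, h1, h2⟩

  obtain ⟨j, hj⟩ : ∃ j, j ∉ e.image c := by
    by_contra hall
    push Not at hall
    have h1 : e.image c = Finset.univ := Finset.eq_univ_iff_forall.2 hall
    have h2 : (e.image c).card = e.card := by
      rw [h1, Finset.card_univ, Fintype.card_fin, hunif e he]
    exact hninj (Finset.card_image_iff.1 h2)
  set i := c x with hi
  have hij : i ≠ j := by
    rintro h
    exact hj (h ▸ Finset.mem_image_of_mem c hx)
  let P : Finset V → Prop := fun f =>
    ∃ p : V × V, p.1 ∈ f ∧ p.2 ∈ f ∧ p.1 ≠ p.2 ∧ (c p.1 = i ∨ c p.1 = j) ∧ (c p.2 = i ∨ c p.2 = j)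
  let F := E.filter P
  let pr : Finset V → V × V := fun f => if h : P f then h.choose else (x, x)
  have hpr : ∀ f, P f → (pr f).1 ∈ f ∧ (pr f).2 ∈ f ∧ (pr f).1 ≠ (pr f).2 ∧
      (c (pr f).1 = i ∨ c (pr f).1 = j) ∧ (c (pr f).2 = i ∨ c (pr f).2 = j) := by
    intro f hf
    have : pr f = hf.choose := dif_pos hf
    rw [this]
    exact hf.choose_spec
  obtain ⟨d, hd⟩ := bicolor E F (Finset.filter_subset _ _) hodd (fun f => (pr f).1)
    (fun f => (pr f).2) (fun f hf => by
      have := hpr f (Finset.mem_filter.1 hf).2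
      exact ⟨this.1, this.2.1, this.2.2.1⟩)
  let c' : V → Fin r := fun v => if c v = i ∨ c v = j then (if d v then i else j) else c v
  have hc'W : ∀ v, (c v = i ∨ c v = j) → c' v = if d v then i else j := fun v hv => if_pos hv
  have hc'N : ∀ v, ¬ (c v = i ∨ c v = j) → c' v = c v := fun v hv => if_neg hv

  have hboth : ∀ f ∈ E, P f → i ∈ f.image c' ∧ j ∈ f.image c' := by
    intro f hf hP
    obtain ⟨h1, h2, -, h4, h5⟩ := hpr f hP
    have hdf := hd f (Finset.mem_filter.2 ⟨hf, hP⟩)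
    have m1 := Finset.mem_image_of_mem c' h1
    have m2 := Finset.mem_image_of_mem c' h2
    rw [hc'W _ h4] at m1
    rw [hc'W _ h5] at m2
    cases hA : d (pr f).1 <;> cases hB : d (pr f).2 <;> simp only [hA, hB] at hdf m1 m2
    · exact absurd rfl hdf
    · exact ⟨by simpa using m2, by simpa using m1⟩
    · exact ⟨by simpa using m1, by simpa using m2⟩
    · exact absurd rfl hdf
  have hsub : ∀ f ∈ E, P f → f.image c ⊆ f.image c' := by
    intro f hf hP z hz
    obtain ⟨v, hv, rfl⟩ := Finset.mem_image.1 hz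
    by_cases hW : c v = i ∨ c v = j
    · rcases hW with h | h
      · rw [h]; exact (hboth f hf hP).1
      · rw [h]; exact (hboth f hf hP).2
    · rw [← hc'N v hW]
      exact Finset.mem_image_of_mem c' hv
  have hle : ∀ f ∈ E, (f.image c).card ≤ (f.image c').card := by
    intro f hf
    by_cases hP : P f
    · exact Finset.card_le_card (hsub f hf hP)
    ·
      have hfac : ∀ u ∈ f, ∀ v ∈ f, c' u = c' v → c u = c v := by
        intro u hu v hv huv
        by_cases huv' : u = v
        · rw [huv']
        have hr : ∀ t, (c t = i ∨ c t = j) → (c' t = i ∨ c' t = j) := by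
          intro t ht
          rw [hc'W t ht]
          cases d t <;> simp
        by_cases hU : c u = i ∨ c u = j <;> by_cases hV : c v = i ∨ c v = j
        · exact absurd ⟨(u, v), hu, hv, huv', hU, hV⟩ hP
        · have := hr u hU
          rw [huv, hc'N v hV] at this
          exact absurd this hV
        · have := hr v hV
          rw [← huv, hc'N u hU] at this
          exact absurd this hU
        · rwa [hc'N u hU, hc'N v hV] at huv
      have hinv : ∀ z ∈ f.image c', ∃ t, ∀ v ∈ f, c' v = z → c v = t := by
        intro z hz
        obtain ⟨u, hu, rfl⟩ := Finset.mem_image.1 hz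
        exact ⟨c u, fun v hv h => hfac v hv u hu h⟩
      choose! g hg using hinv
      have : f.image c ⊆ (f.image c').image g := by
        intro z hz
        obtain ⟨v, hv, rfl⟩ := Finset.mem_image.1 hz
        have hm := Finset.mem_image_of_mem c' hv
        rw [hg _ hm v hv rfl]
        exact Finset.mem_image_of_mem g hm
      exact (Finset.card_le_card this).trans Finset.card_image_le
  have hlt : (e.image c).card < (e.image c').card := by
    have hP : P e := ⟨(x, y), hx, hy, hne, Or.inl rfl, Or.inl hxy.symm⟩
    apply Finset.card_lt_card
    exact (Finset.ssubset_iff_of_subset (hsub e he hP)).2 ⟨j, (hboth e he hP).2, hj⟩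
  have := Finset.sum_lt_sum hle ⟨e, he, hlt⟩
  exact absurd (hc c') (not_le.2 this)
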